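/- Let F be an infinite field. Define B_2(F) as the quotient of the free abelian group ℤ[F^*] by the subgroup R_2(F) generated by {1} together with all five-term elements Σ_{i=1}^{5} (−1)^i {r(z_1, …, ẑ_i, …, z_5)} for quintuples of pairwise distinct elements z_1, …, z_5 of F, and write {x}_2 for the class of {x}. Let δ : ℤ[F^*] → B_2(F) ⊗_ℤ F^* be the homomorphism {x} ↦ {x}_2 ⊗ x. For a 6-tuple (l_0, …, l_5) of vectors in F³ in generic position (any three of them linearly independent), define the element r_3(l_0, …, l_5) := Σ_{σ ∈ S_6} sgn(σ) { ρ(l_{σ(0)}, …, l_{σ(5)}) } ∈ ℤ[F^*], where ρ(l_0,…,l_5) = (Δ(l_0,l_1,l_3)Δ(l_1,l_2,l_4)Δ(l_2,l_0,l_5)) / (Δ(l_0,l_1,l_4)Δ(l_1,l_2,l_5)Δ(l_2,l_0,l_3)). Then for any seven vectors x_1, …, x_7 ∈ F³ in generic position (any three linearly independent), the element Σ_{i=1}^{7} (−1)^i r_3(x_1, …, x̂_i, …, x_7) is annihilated by δ after tensoring with ℚ: its image in (B_2(F) ⊗_ℤ F^*) ⊗_ℤ ℚ is zero. (This is the generalization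 of Abel's equation making B_3(F) → B_2(F) ⊗ F^* → ⋀³F^* into a complex.) -/

import Mathlib

set_option synthInstance.maxHeartbeats 1000000
set_option maxHeartbeats 1000000

open scoped TensorProduct

noncomputable section

variable (F : Type*) [Field F]

/-- The cross-ratio `r(a,b,c,d) = ((a−c)(b−d))/((a−d)(b−c))`. -/
def crossRatio (a b c d : F) : F := ((a - c) * (b - d)) / ((a - d) * (b - c))

/-- The five-term (Abel) elements of `ℤ[F^*]`:
`Σ_{i=1}^5 (−1)^i {r(z_1,…,ẑ_i,…,z_5)}` for pairwise distinct `z_1,…,z_5 ∈ F`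
(the cross-ratios being the units `r i`). -/
def fiveTermSet : Set (Fˣ →₀ ℤ) :=
  {D | ∃ (z : Fin 5 → F) (r : Fin 5 → Fˣ), Function.Injective z ∧
    (∀ i : Fin 5, (r i : F) = crossRatio F (z (i.succAbove 0)) (z (i.succAbove 1))
        (z (i.succAbove 2)) (z (i.succAbove 3))) ∧
    D = ∑ i : Fin 5, (-1 : ℤ) ^ ((i : ℕ) + 1) • Finsupp.single (r i) (1 : ℤ)}

/-- The subgroup `R_2(F) ⊆ ℤ[F^*]` generated by `{1}` and the five-term elements. -/
def R2 : AddSubgroup (Fˣ →₀ ℤ) :=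
  AddSubgroup.closure ({Finsupp.single 1 1} ∪ fiveTermSet F)

/-- `B_2(F) = ℤ[F^*]/R_2(F)`. -/
abbrev B2 : Type _ := (Fˣ →₀ ℤ) ⧸ R2 F

/-- The homomorphism `δ : ℤ[F^*] → B_2(F) ⊗ F^*`, `{x} ↦ {x}_2 ⊗ x`. -/
def deltaBS : (Fˣ →₀ ℤ) →+ (B2 F ⊗[ℤ] Additive Fˣ) :=
  Finsupp.liftAddHom fun x =>
    (LinearMap.toSpanSingleton ℤ (B2 F ⊗[ℤ] Additive Fˣ)
      (((QuotientAddGroup.mk (Finsupp.single x 1) : B2 F)) ⊗ₜ[ℤ]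
        Additive.ofMul x)).toAddMonoidHom

/-- `Δ(a,b,c)`: the determinant of the `3×3` matrix with rows `a`, `b`, `c`. -/
def det3 (a b c : Fin 3 → F) : F := Matrix.det (Matrix.of ![a, b, c])

/-- The generalized cross-ratio
`ρ(l_0,…,l_5) = (Δ(l_0,l_1,l_3)Δ(l_1,l_2,l_4)Δ(l_2,l_0,l_5)) /
(Δ(l_0,l_1,l_4)Δ(l_1,l_2,l_5)Δ(l_2,l_0,l_3))` of six vectors in `F³`. -/
def tripleRatio (l : Fin 6 → Fin 3 → F) : F :=
  (det3 F (l 0) (l 1) (l 3) * det3 F (l 1) (l 2) (l 4) * det3 F (l 2) (l 0) (l 5)) /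
    (det3 F (l 0) (l 1) (l 4) * det3 F (l 1) (l 2) (l 5) * det3 F (l 2) (l 0) (l 3))


section helpers

variable {F}

theorem det3_eq (a b c : Fin 3 → F) : det3 F a b c =
    a 0 * (b 1 * c 2 - b 2 * c 1) - a 1 * (b 0 * c 2 - b 2 * c 0)
      + a 2 * (b 0 * c 1 - b 1 * c 0) := by
  simp [det3, Matrix.det_fin_three]
  ring

/-- cross ratio of four vectors projected from `l` -/
def cr3 (l a b c d : Fin 3 → F) : F :=
  (det3 F l a c * det3 F l b d) / (det3 F l a d * det3 F l b c)

/-- The abstract properties of `(x, u) ↦ {x}₂ ⊗ u ⊗ 1`. -/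
structure Pairing (W : Type*) [AddCommGroup W] (g : F → F → W) : Prop where
  tf : ∀ w : W, w + w = 0 → w = 0
  one : ∀ u, g 1 u = 0
  five : ∀ (u : F) (z : Fin 5 → F), Function.Injective z →
    g (crossRatio F (z 1) (z 2) (z 3) (z 4)) u - g (crossRatio F (z 0) (z 2) (z 3) (z 4)) u
    + g (crossRatio F (z 0) (z 1) (z 3) (z 4)) u - g (crossRatio F (z 0) (z 1) (z 2) (z 4)) u
    + g (crossRatio F (z 0) (z 1) (z 2) (z 3)) u = 0
  mul : ∀ x u v, u ≠ 0 → v ≠ 0 → g x (u * v) = g x u + g x v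

namespace Pairing

variable {W : Type*} [AddCommGroup W] {g : F → F → W}

theorem right_one (P : Pairing W g) (x : F) : g x 1 = 0 := by
  have := P.mul x 1 1 one_ne_zero one_ne_zero
  simpa using this

theorem right_neg (P : Pairing W g) (x u : F) (hu : u ≠ 0) : g x (-u) = g x u := by
  have h1 : g x (-1) = 0 := by
    have := P.mul x (-1) (-1) (by simp) (by simp)
    rw [neg_one_mul, neg_neg, P.right_one] at this
    exact P.tf _ this.symm
  have := P.mul x (-1) u (by simp) hu
  rw [h1] at this
  simpa using this

theorem right_div (P : Pairing W g) (x u v : F) (hu : u ≠ 0) (hv : v ≠ 0) : g x (u / v) = g x u - g x v := by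
  have := P.mul x (u / v) v (div_ne_zero hu hv) hv
  rw [div_mul_cancel₀ _ hv] at this
  rw [this]; abel

theorem fiveV (P : Pairing W g) [Infinite F] (u : F) (a b : Fin 5 → F)
    (h : ∀ i j, i ≠ j → a i * b j - a j * b i ≠ 0) (c : Fin 5 → Fin 5 → F)
    (k : F) (hk : k ≠ 0) (hc : ∀ i j, k * c i j = a i * b j - a j * b i) :
    g (c 1 3 * c 2 4 / (c 1 4 * c 2 3)) u - g (c 0 3 * c 2 4 / (c 0 4 * c 2 3)) u
    + g (c 0 3 * c 1 4 / (c 0 4 * c 1 3)) u - g (c 0 2 * c 1 4 / (c 0 4 * c 1 2)) u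
    + g (c 0 2 * c 1 3 / (c 0 3 * c 1 2)) u = 0 := by
  classical
  obtain ⟨t, ht⟩ := Infinite.exists_notMem_finset
    (Finset.univ.image (fun i : Fin 5 => - a i / b i))
  have hne : ∀ i, b i ≠ 0 → a i + t * b i ≠ 0 := by
    intro i hb h0
    apply ht
    simp only [Finset.mem_image, Finset.mem_univ, true_and]
    refine ⟨i, ?_⟩
    field_simp
    linear_combination -h0
  have hne : ∀ i, a i + t * b i ≠ 0 := by
    intro i
    by_cases hb : b i = 0
    · have hi : i ≠ i + 1 := by fin_cases i <;> decide
      have := h i (i + 1) hi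
      rw [hb] at this ⊢
      intro h0
      apply this
      have : a i = 0 := by simpa using h0
      simp [this]
    · exact hne i hb
  have hcc : ∀ i j, c i j = k⁻¹ * (a i * b j - a j * b i) := by
    intro i j
    rw [← hc]; field_simp
  have hz : ∀ i j, b j / (a j + t * b j) - b i / (a i + t * b i)
      = k * c i j / ((a i + t * b i) * (a j + t * b j)) := by
    intro i j
    rw [hc, div_sub_div _ _ (hne j) (hne i), div_eq_div_iff
      (mul_ne_zero (hne j) (hne i)) (mul_ne_zero (hne i) (hne j))]
    ring
  have hc0 : ∀ i j, i ≠ j → c i j ≠ 0 := by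
    intro i j hij h0
    apply h i j hij
    rw [← hc, h0, mul_zero]
  have key : ∀ i j m n, i ≠ n → j ≠ m → crossRatio F (b i / (a i + t * b i)) (b j / (a j + t * b j))
      (b m / (a m + t * b m)) (b n / (a n + t * b n)) = c i m * c j n / (c i n * c j m) := by
    intro i j m n h1 h2
    have := hne i
    have := hne j
    have := hne m
    have := hne n
    have := hc0 i n h1
    have := hc0 j m h2
    rw [crossRatio, ← neg_sub (b m / _), ← neg_sub (b n / _), ← neg_sub (b n / _),
      ← neg_sub (b m / _), hz, hz, hz, hz]
    field_simp
  have := P.five u (fun i => b i / (a i + t * b i)) (by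
    intro i j hij
    by_contra hne'
    have h1 := hz i j
    replace hij : b i / (a i + t * b i) = b j / (a j + t * b j) := hij
    rw [hij, sub_self] at h1
    have := hne i
    have := hne j
    have := hc0 i j hne'
    symm at h1
    rw [div_eq_zero_iff] at h1
    simp_all)
  rw [key _ _ _ _ (by decide) (by decide), key _ _ _ _ (by decide) (by decide),
    key _ _ _ _ (by decide) (by decide), key _ _ _ _ (by decide) (by decide),
    key _ _ _ _ (by decide) (by decide)] at this
  exact this

/-- `s x = {x} + {1/x}` is multiplicative. -/
theorem s_mul (P : Pairing W g) [Infinite F] (u x y : F) (hx : x ≠ 0) (hy : y ≠ 0) (hx1 : x ≠ 1) (hy1 : y ≠ 1)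
    (hxy : x * y ≠ 1) :
    g (x * y) u + g (x * y)⁻¹ u = g x u + g x⁻¹ u + (g y u + g y⁻¹ u) := by
  have hx1' : x - 1 ≠ 0 := sub_ne_zero.mpr hx1
  have hy1' : y - 1 ≠ 0 := sub_ne_zero.mpr hy1
  have hxy' : x * y - 1 ≠ 0 := sub_ne_zero.mpr hxy
  -- points `0, ∞, 1, x, x y`
  have h1 := P.fiveV u ![0, 1, 1, x, x * y] ![1, 0, 1, 1, 1] (by
    intro i j hij
    fin_cases i <;> fin_cases j <;> simp at hij ⊢ <;>
      first
        | assumption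
        | (intro h0; first
            | exact hx1' (by linear_combination h0)
            | exact hx1' (by linear_combination -h0)
            | exact hxy' (by linear_combination h0)
            | exact hxy' (by linear_combination -h0)
            | exact (mul_ne_zero hx hy1') (by linear_combination h0)
            | exact (mul_ne_zero hx hy1') (by linear_combination -h0)
            | simp_all)
        | simp_all) _ 1 one_ne_zero (fun i j => by rw [one_mul])
  have h2 := P.fiveV u ![1, 0, 1, x, x * y] ![0, 1, 1, 1, 1] (by
    intro i j hij
    fin_cases i <;> fin_cases j <;> simp at hij ⊢ <;>
      first
        | assumption
        | (intro h0; first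
            | exact hx1' (by linear_combination h0)
            | exact hx1' (by linear_combination -h0)
            | exact hxy' (by linear_combination h0)
            | exact hxy' (by linear_combination -h0)
            | exact (mul_ne_zero hx hy1') (by linear_combination h0)
            | exact (mul_ne_zero hx hy1') (by linear_combination -h0)
            | simp_all)
        | simp_all) _ 1 one_ne_zero (fun i j => by rw [one_mul])
  simp at h1 h2
  have e1 : x / (x * y) = y⁻¹ := by field_simp
  have e2 : x * y / x = y := by field_simp
  rw [e1] at h1
  rw [e2] at h2
  have h3 := congrArg₂ (· + ·) h1 h2
  simp only [mul_inv, add_zero] at h3 ⊢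
  rw [← sub_eq_zero, ← neg_eq_zero, mul_comm x⁻¹]
  refine Eq.trans ?_ h3
  abel

theorem inv (P : Pairing W g) [Infinite F] (u x : F) (hx : x ≠ 0) : g x⁻¹ u = - g x u := by
  classical
  by_cases hx1 : x = 1
  · subst hx1; simp [P.one]
  obtain ⟨z, hz⟩ := Infinite.exists_notMem_finset ({0, 1, x, x⁻¹} : Finset F)
  simp only [Finset.mem_insert, Finset.mem_singleton, not_or] at hz
  obtain ⟨hz0, hz1, hzx, hzx'⟩ := hz
  have hzx1 : z * x ≠ 1 := fun h => hzx' (eq_inv_of_mul_eq_one_left h)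
  have h1 := P.s_mul u z x hz0 hx hz1 hx1 hzx1
  have h2 := P.s_mul u (z * x) x⁻¹ (mul_ne_zero hz0 hx) (inv_ne_zero hx) hzx1
    (by simpa using hx1) (by rwa [mul_inv_cancel_right₀ hx])
  rw [mul_inv_cancel_right₀ hx, inv_inv, h1] at h2
  have h3 : (g x⁻¹ u + g x u) + (g x⁻¹ u + g x u) = 0 := by
    rw [← sub_eq_zero] at h2
    rw [← neg_eq_zero]
    refine Eq.trans ?_ h2
    abel
  exact eq_neg_of_add_eq_zero_left (P.tf _ h3)

theorem plucker (l a b c d : Fin 3 → F) : det3 F l a b * det3 F l c d =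
    det3 F l a c * det3 F l b d - det3 F l a d * det3 F l b c := by
  simp only [det3_eq]; ring

theorem five3 (P : Pairing W g) [Infinite F] (u : F) (l : Fin 3 → F) (v : Fin 5 → Fin 3 → F)
    (h : ∀ i j, i ≠ j → det3 F l (v i) (v j) ≠ 0) :
    g (cr3 l (v 1) (v 2) (v 3) (v 4)) u - g (cr3 l (v 0) (v 2) (v 3) (v 4)) u
    + g (cr3 l (v 0) (v 1) (v 3) (v 4)) u - g (cr3 l (v 0) (v 1) (v 2) (v 4)) u
    + g (cr3 l (v 0) (v 1) (v 2) (v 3)) u = 0 := by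
  have hp : ∀ i j, det3 F l (v 0) (v 1) * det3 F l (v i) (v j) =
      det3 F l (v 0) (v i) * det3 F l (v 1) (v j)
        - det3 F l (v 0) (v j) * det3 F l (v 1) (v i) := fun i j => plucker l _ _ _ _
  exact P.fiveV u (fun i => det3 F l (v 0) (v i)) (fun i => det3 F l (v 1) (v i))
    (fun i j hij => by
      rw [← hp]
      exact mul_ne_zero (h 0 1 (by decide)) (h i j hij))
    (fun i j => det3 F l (v i) (v j)) (det3 F l (v 0) (v 1)) (h 0 1 (by decide)) hp

theorem det3_swap (l a b : Fin 3 → F) : det3 F l b a = - det3 F l a b := by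
  simp only [det3_eq]; ring

theorem cr3_one (l a b c d : Fin 3 → F) (h0 : det3 F l c d = 0) (h1 : det3 F l a d ≠ 0)
    (h2 : det3 F l b c ≠ 0) : cr3 l a b c d = 1 := by
  have := plucker l a b c d
  rw [h0, mul_zero] at this
  rw [cr3, div_eq_one_iff_eq (mul_ne_zero h1 h2)]
  exact (sub_eq_zero.mp this.symm)

/-- five-term relation, where the last two points may coincide. -/
theorem five_deg (P : Pairing W g) [Infinite F] (u : F) (l a b c d e : Fin 3 → F)
    (hab : det3 F l a b ≠ 0) (hac : det3 F l a c ≠ 0) (had : det3 F l a d ≠ 0)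
    (hae : det3 F l a e ≠ 0) (hbc : det3 F l b c ≠ 0) (hbd : det3 F l b d ≠ 0)
    (hbe : det3 F l b e ≠ 0) (hcd : det3 F l c d ≠ 0) (hce : det3 F l c e ≠ 0) :
    g (cr3 l b c d e) u - g (cr3 l a c d e) u + g (cr3 l a b d e) u
      - g (cr3 l a b c e) u + g (cr3 l a b c d) u = 0 := by
  by_cases hde : det3 F l d e = 0
  · rw [cr3_one l b c d e hde hbe hcd, cr3_one l a c d e hde hae hcd,
      cr3_one l a b d e hde hae hbd, P.one]
    have : cr3 l a b c e = cr3 l a b c d := by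
      have := plucker l a b d e
      rw [hde, mul_zero] at this
      rw [cr3, cr3, div_eq_div_iff (mul_ne_zero hae hbc) (mul_ne_zero had hbc)]
      linear_combination - det3 F l a c * det3 F l b c * this
    rw [this]; abel
  · refine P.five3 u l ![a, b, c, d, e] ?_
    intro i j hij
    fin_cases i <;> fin_cases j <;> first
      | exact absurd rfl hij
      | assumption
      | (rw [det3_swap]; exact neg_ne_zero.mpr (by assumption))

end Pairing

/-- generic 7-tuples -/
def Gen (y : Fin 7 → Fin 3 → F) : Prop :=
  ∀ i j k, i ≠ j → i ≠ k → j ≠ k → det3 F (y i) (y j) (y k) ≠ 0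

theorem Gen.perm {y : Fin 7 → Fin 3 → F} (h : Gen y) (τ : Equiv.Perm (Fin 7)) :
    Gen (y ∘ τ) := fun i j k h1 h2 h3 =>
  h _ _ _ (τ.injective.ne h1) (τ.injective.ne h2) (τ.injective.ne h3)

section alt

variable {W : Type*} [AddCommGroup W]

/-- alternation over `S_7` -/
def alt (x : Fin 7 → Fin 3 → F) (f : (Fin 7 → Fin 3 → F) → W) : W :=
  ∑ τ : Equiv.Perm (Fin 7), ((Equiv.Perm.sign τ : ℤˣ) : ℤ) • f (x ∘ τ)

theorem alt_perm {x : Fin 7 → Fin 3 → F} (hx : Gen x) (σ : Equiv.Perm (Fin 7))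
    (f f' : (Fin 7 → Fin 3 → F) → W) (h : ∀ y, Gen y → f (y ∘ σ) = f' y) :
    alt x f' = ((Equiv.Perm.sign σ : ℤˣ) : ℤ) • alt x f := by
  unfold alt
  rw [← Equiv.sum_comp (Equiv.mulRight σ) (fun τ : Equiv.Perm (Fin 7) =>
    ((Equiv.Perm.sign τ : ℤˣ) : ℤ) • f (x ∘ τ)), Finset.smul_sum]
  refine Finset.sum_congr rfl fun τ _ => ?_
  rw [← h _ (hx.perm τ), smul_smul]
  congr 1
  simp only [Equiv.coe_mulRight, Equiv.Perm.sign_mul, Units.val_mul]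
  rw [mul_comm, mul_assoc, ← Units.val_mul, ← Units.val_mul, Int.units_mul_self]
  simp

theorem alt_add (x : Fin 7 → Fin 3 → F) (f f' : (Fin 7 → Fin 3 → F) → W) :
    alt x (fun y => f y + f' y) = alt x f + alt x f' := by
  simp [alt, Finset.sum_add_distrib]

theorem alt_sub (x : Fin 7 → Fin 3 → F) (f f' : (Fin 7 → Fin 3 → F) → W) :
    alt x (fun y => f y - f' y) = alt x f - alt x f' := by
  simp [alt, smul_sub, Finset.sum_sub_distrib]

theorem alt_neg (x : Fin 7 → Fin 3 → F) (f : (Fin 7 → Fin 3 → F) → W) :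
    alt x (fun y => - f y) = - alt x f := by
  simp [alt]

theorem alt_congr {x : Fin 7 → Fin 3 → F} (hx : Gen x) (f f' : (Fin 7 → Fin 3 → F) → W)
    (h : ∀ y, Gen y → f y = f' y) : alt x f = alt x f' := by
  unfold alt
  exact Finset.sum_congr rfl fun τ _ => by rw [h _ (hx.perm τ)]

theorem alt_dead (tf : ∀ w : W, w + w = 0 → w = 0) {x : Fin 7 → Fin 3 → F} (hx : Gen x)
    (i j : Fin 7) (hij : i ≠ j) (f : (Fin 7 → Fin 3 → F) → W)
    (h : ∀ y, Gen y → f (y ∘ Equiv.swap i j) = f y) : alt x f = 0 := by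
  have := alt_perm hx (Equiv.swap i j) f f h
  rw [Equiv.Perm.sign_swap hij] at this
  apply tf
  nth_rewrite 1 [this]
  simp

/-- the sum over `(i, σ)` is an alternation over `S_7` -/
theorem sum_eq_alt (x : Fin 7 → Fin 3 → F) (H : (Fin 6 → Fin 3 → F) → W) :
    ∑ i : Fin 7, (-1 : ℤ) ^ ((i : ℕ) + 1) • ∑ σ : Equiv.Perm (Fin 6),
      ((Equiv.Perm.sign σ : ℤˣ) : ℤ) • H (fun j => x (i.succAbove (σ j)))
    = - alt x (fun y => H (fun j => y j.succ)) := by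
  unfold alt
  rw [← Finset.sum_neg_distrib]
  simp only [Finset.smul_sum]
  rw [← Fintype.sum_prod_type']
  refine Fintype.sum_bijective
    (fun q : Fin 7 × Equiv.Perm (Fin 6) =>
      (Fin.cycleRange q.1)⁻¹ * Equiv.Perm.decomposeFin.symm (0, q.2)) ?_ _ _ ?_
  · rw [Fintype.bijective_iff_injective_and_card]
    constructor
    · rintro ⟨i, σ⟩ ⟨i', σ'⟩ h
      simp only at h
      have h0 := congrArg (fun τ : Equiv.Perm (Fin 7) => τ 0) h
      simp [Equiv.Perm.inv_def] at h0
      subst h0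
      have := mul_left_cancel h
      simpa using this
    · simp [Fintype.card_perm, Nat.factorial]
  · rintro ⟨i, σ⟩
    have h1 : ∀ j : Fin 6, ((Fin.cycleRange i)⁻¹ * Equiv.Perm.decomposeFin.symm (0, σ)) j.succ
        = i.succAbove (σ j) := by
      intro j
      simp [Equiv.Perm.inv_def]
    simp only [Function.comp_apply, h1]
    rw [smul_smul, ← neg_smul]
    congr 1
    simp [Equiv.Perm.sign_mul, Fin.sign_cycleRange, pow_succ]

end alt


/-- the intersection of the lines `14` and `36` -/
def pp (y : Fin 7 → Fin 3 → F) : Fin 3 → F :=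
  det3 F (y 1) (y 3) (y 6) • y 4 - det3 F (y 4) (y 3) (y 6) • y 1

theorem det3_sub_smul (a b c d : Fin 3 → F) (s t : F) :
    det3 F a b (s • c - t • d) = s * det3 F a b c - t * det3 F a b d := by
  simp only [det3_eq, Pi.sub_apply, Pi.smul_apply, smul_eq_mul]; ring

theorem det3_neg (a b c : Fin 3 → F) : det3 F a b (-c) = - det3 F a b c := by
  simp only [det3_eq, Pi.neg_apply]; ring

theorem det_pp1 (y : Fin 7 → Fin 3 → F) : det3 F (y 2) (y 1) (pp y)
    = det3 F (y 1) (y 2) (y 4) * det3 F (y 3) (y 1) (y 6) := by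
  rw [pp, det3_sub_smul]; simp only [det3_eq]; ring

theorem det_pp3 (y : Fin 7 → Fin 3 → F) : det3 F (y 2) (y 3) (pp y)
    = - (det3 F (y 2) (y 3) (y 6) * det3 F (y 3) (y 1) (y 4)) := by
  rw [pp, det3_sub_smul]; simp only [det3_eq]; ring

theorem det_pp4 (y : Fin 7 → Fin 3 → F) : det3 F (y 2) (y 4) (pp y)
    = - (det3 F (y 4) (y 3) (y 6) * det3 F (y 2) (y 4) (y 1)) := by
  rw [pp, det3_sub_smul]; simp only [det3_eq]; ring

/-- the triple ratio of the last six vectors -/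
def rho (y : Fin 7 → Fin 3 → F) : F := tripleRatio F (fun j => y j.succ)

theorem rho_eq (y : Fin 7 → Fin 3 → F) : rho y =
    (det3 F (y 1) (y 2) (y 4) * det3 F (y 2) (y 3) (y 5) * det3 F (y 3) (y 1) (y 6)) /
    (det3 F (y 1) (y 2) (y 5) * det3 F (y 2) (y 3) (y 6) * det3 F (y 3) (y 1) (y 4)) := rfl

theorem det3_swap' (l a b : Fin 3 → F) : det3 F a l b = - det3 F l a b := by
  simp only [det3_eq]; ring

theorem rho_ne {y : Fin 7 → Fin 3 → F} (h : Gen y) : rho y ≠ 0 := by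
  rw [rho_eq]
  refine div_ne_zero (mul_ne_zero (mul_ne_zero ?_ ?_) ?_)
    (mul_ne_zero (mul_ne_zero ?_ ?_) ?_) <;>
  exact h _ _ _ (by decide) (by decide) (by decide)

theorem cr_rho {y : Fin 7 → Fin 3 → F} (h : Gen y) :
    cr3 (y 2) (y 1) (y 3) (pp y) (y 5) = rho y := by
  have h1 : det3 F (y 1) (y 2) (y 5) ≠ 0 := h _ _ _ (by decide) (by decide) (by decide)
  have h2 : det3 F (y 2) (y 3) (y 6) ≠ 0 := h _ _ _ (by decide) (by decide) (by decide)
  have h3 : det3 F (y 3) (y 1) (y 4) ≠ 0 := h _ _ _ (by decide) (by decide) (by decide)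
  rw [cr3, rho_eq, det_pp1, det_pp3, det3_swap' (y 1) (y 2) (y 5)]
  field_simp

theorem cr_inv (l a b c d : Fin 3 → F) : cr3 l b a c d = (cr3 l a b c d)⁻¹ := by
  rw [cr3, cr3, inv_div, mul_comm (det3 F l b c), mul_comm (det3 F l b d)]

/-- the cyclic symmetry -/
def cyc : Equiv.Perm (Fin 7) :=
  ⟨![0, 2, 3, 1, 5, 6, 4], ![0, 3, 1, 2, 6, 4, 5], by decide, by decide⟩

/-- the inverting symmetry -/
def tau : Equiv.Perm (Fin 7) :=
  ⟨![0, 2, 1, 3, 5, 4, 6], ![0, 2, 1, 3, 5, 4, 6], by decide, by decide⟩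

theorem rho_cyc (y : Fin 7 → Fin 3 → F) : rho (y ∘ cyc) = rho y := by
  change (det3 F (y 2) (y 3) (y 5) * det3 F (y 3) (y 1) (y 6) * det3 F (y 1) (y 2) (y 4)) /
    (det3 F (y 2) (y 3) (y 6) * det3 F (y 3) (y 1) (y 4) * det3 F (y 1) (y 2) (y 5)) = _
  rw [rho_eq]
  congr 1 <;> ring

theorem rho_tau (y : Fin 7 → Fin 3 → F) : rho (y ∘ tau) = (rho y)⁻¹ := by
  change (det3 F (y 2) (y 1) (y 5) * det3 F (y 1) (y 3) (y 4) * det3 F (y 3) (y 2) (y 6)) /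
    (det3 F (y 2) (y 1) (y 4) * det3 F (y 1) (y 3) (y 6) * det3 F (y 3) (y 2) (y 5)) = _
  rw [rho_eq, inv_div, det3_swap' (y 1) (y 2), det3_swap' (y 1) (y 2), det3_swap' (y 3) (y 1),
    det3_swap' (y 3) (y 1), det3_swap' (y 2) (y 3), det3_swap' (y 2) (y 3), ← neg_div_neg_eq]
  congr 1 <;> ring

section core

variable [Infinite F] {W : Type*} [AddCommGroup W] {g : F → F → W}

theorem core (P : Pairing W g) {x : Fin 7 → Fin 3 → F} (hx : Gen x) :
    alt x (fun y => g (rho y) (det3 F (y 1) (y 2) (y 4))) = 0 := by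
  have five : alt x (fun y =>
      g (cr3 (y 2) (y 3) (y 4) (pp y) (y 5)) (det3 F (y 1) (y 2) (y 4))
      - g (cr3 (y 2) (y 1) (y 4) (pp y) (y 5)) (det3 F (y 1) (y 2) (y 4))
      + g (rho y) (det3 F (y 1) (y 2) (y 4))
      - g (cr3 (y 2) (y 1) (y 3) (y 4) (y 5)) (det3 F (y 1) (y 2) (y 4))
      + g (cr3 (y 2) (y 1) (y 3) (y 4) (pp y)) (det3 F (y 1) (y 2) (y 4))) = alt x 0 := by
    refine alt_congr hx _ _ fun y hy => ?_
    have G : ∀ i j k, i ≠ j ∧ i ≠ k ∧ j ≠ k → det3 F (y i) (y j) (y k) ≠ 0 :=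
      fun i j k h => hy i j k h.1 h.2.1 h.2.2
    rw [← cr_rho hy]
    refine P.five_deg _ (y 2) (y 1) (y 3) (y 4) (pp y) (y 5) (G _ _ _ (by decide))
      (G _ _ _ (by decide)) ?_ (G _ _ _ (by decide)) (G _ _ _ (by decide)) ?_
      (G _ _ _ (by decide)) ?_ (G _ _ _ (by decide))
    · rw [det_pp1]
      exact mul_ne_zero (G _ _ _ (by decide)) (G _ _ _ (by decide))
    · rw [det_pp3]
      exact neg_ne_zero.mpr (mul_ne_zero (G _ _ _ (by decide)) (G _ _ _ (by decide)))
    · rw [det_pp4]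
      exact neg_ne_zero.mpr (mul_ne_zero (G _ _ _ (by decide)) (G _ _ _ (by decide)))
  have z : alt x (0 : (Fin 7 → Fin 3 → F) → W) = 0 := by simp [alt]
  rw [z, alt_add, alt_sub, alt_add, alt_sub] at five
  -- the term `E1` is symmetric in `3, 6`
  have d1 : alt x (fun y =>
      g (cr3 (y 2) (y 1) (y 4) (pp y) (y 5)) (det3 F (y 1) (y 2) (y 4))) = 0 := by
    refine alt_dead P.tf hx 3 6 (by decide) _ fun y hy => ?_
    have hp : pp (y ∘ Equiv.swap 3 6) = - pp y := by
      change det3 F (y 1) (y 6) (y 3) • y 4 - det3 F (y 4) (y 6) (y 3) • y 1 = _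
      rw [Pairing.det3_swap (y 1), Pairing.det3_swap (y 4), pp]
      module
    change g (cr3 (y 2) (y 1) (y 4) (pp (y ∘ Equiv.swap 3 6)) (y 5)) (det3 F (y 1) (y 2) (y 4)) = _
    rw [hp, cr3, cr3, det3_neg, det3_neg, neg_mul, mul_neg, neg_div_neg_eq]
  have d3 : alt x (fun y =>
      g (cr3 (y 2) (y 1) (y 3) (y 4) (y 5)) (det3 F (y 1) (y 2) (y 4))) = 0 :=
    alt_dead P.tf hx 0 6 (by decide) _ fun y hy => rfl
  have d4 : alt x (fun y =>
      g (cr3 (y 2) (y 1) (y 3) (y 4) (pp y)) (det3 F (y 1) (y 2) (y 4))) = 0 :=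
    alt_dead P.tf hx 0 5 (by decide) _ fun y hy => rfl
  have d0 : alt x (fun y =>
      g (cr3 (y 2) (y 3) (y 4) (pp y) (y 5)) (det3 F (y 1) (y 2) (y 4)))
      = alt x (fun y => g (rho y) (det3 F (y 1) (y 2) (y 4))) := by
    have := alt_perm hx (Equiv.swap 1 4)
      (fun y => g (cr3 (y 2) (y 3) (y 4) (pp y) (y 5)) (det3 F (y 1) (y 2) (y 4)))
      (fun y => - g (rho y) (det3 F (y 1) (y 2) (y 4))) (by
        intro y hy
        have hp : pp (y ∘ Equiv.swap 1 4) = - pp y := by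
          change det3 F (y 4) (y 3) (y 6) • y 1 - det3 F (y 1) (y 3) (y 6) • y 4 = _
          rw [pp]
          module
        change g (cr3 (y 2) (y 3) (y 1) (pp (y ∘ Equiv.swap 1 4)) (y 5))
          (det3 F (y 4) (y 2) (y 1)) = _
        have h1 : cr3 (y 2) (y 3) (y 1) (- pp y) (y 5) = (rho y)⁻¹ := by
          rw [← cr_rho hy, ← cr_inv, cr3, cr3, det3_neg, det3_neg, neg_mul, mul_neg,
            neg_div_neg_eq]
        have h2 : det3 F (y 4) (y 2) (y 1) = - det3 F (y 1) (y 2) (y 4) := by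
          simp only [det3_eq]; ring
        rw [hp, h1, h2, P.right_neg _ _ (hy _ _ _ (by decide) (by decide) (by decide)),
          P.inv _ _ (rho_ne hy)])
    rw [alt_neg, Equiv.Perm.sign_swap (by decide)] at this
    simpa using this.symm
  rw [d0, d1, d3, d4] at five
  apply P.tf
  simpa using five

theorem core' (P : Pairing W g) {x : Fin 7 → Fin 3 → F} (hx : Gen x) :
    alt x (fun y => g (rho y) (rho y)) = 0 := by
  have h1 := core P hx
  have h2 : alt x (fun y => g (rho y) (det3 F (y 2) (y 3) (y 5))) = 0 := by
    rw [alt_perm hx cyc (fun y => g (rho y) (det3 F (y 1) (y 2) (y 4))) _ (fun y _ => by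
      change g (rho (y ∘ cyc)) (det3 F (y 2) (y 3) (y 5)) = _
      rw [rho_cyc]), h1, smul_zero]
  have h3 : alt x (fun y => g (rho y) (det3 F (y 3) (y 1) (y 6))) = 0 := by
    rw [alt_perm hx cyc (fun y => g (rho y) (det3 F (y 2) (y 3) (y 5))) _ (fun y _ => by
      change g (rho (y ∘ cyc)) (det3 F (y 3) (y 1) (y 6)) = _
      rw [rho_cyc]), h2, smul_zero]
  have h4 : alt x (fun y => g (rho y) (det3 F (y 1) (y 2) (y 5))) = 0 := by
    rw [← neg_eq_zero, ← alt_neg]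
    rw [alt_perm hx tau (fun y => g (rho y) (det3 F (y 1) (y 2) (y 4))) _ (fun y hy => by
      change g (rho (y ∘ tau)) (det3 F (y 2) (y 1) (y 5)) = _
      rw [rho_tau, P.inv _ _ (rho_ne hy), det3_swap' (y 1) (y 2),
        P.right_neg _ _ (hy _ _ _ (by decide) (by decide) (by decide))]), h1, smul_zero]
  have h5 : alt x (fun y => g (rho y) (det3 F (y 2) (y 3) (y 6))) = 0 := by
    rw [alt_perm hx cyc (fun y => g (rho y) (det3 F (y 1) (y 2) (y 5))) _ (fun y _ => by
      change g (rho (y ∘ cyc)) (det3 F (y 2) (y 3) (y 6)) = _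
      rw [rho_cyc]), h4, smul_zero]
  have h6 : alt x (fun y => g (rho y) (det3 F (y 3) (y 1) (y 4))) = 0 := by
    rw [alt_perm hx cyc (fun y => g (rho y) (det3 F (y 2) (y 3) (y 6))) _ (fun y _ => by
      change g (rho (y ∘ cyc)) (det3 F (y 3) (y 1) (y 4)) = _
      rw [rho_cyc]), h5, smul_zero]
  have key := alt_congr hx (fun y => g (rho y) (rho y))
    (fun y => (g (rho y) (det3 F (y 1) (y 2) (y 4)) + g (rho y) (det3 F (y 2) (y 3) (y 5))
      + g (rho y) (det3 F (y 3) (y 1) (y 6))) - (g (rho y) (det3 F (y 1) (y 2) (y 5))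
      + g (rho y) (det3 F (y 2) (y 3) (y 6)) + g (rho y) (det3 F (y 3) (y 1) (y 4)))) (by
    intro y hy
    have G : ∀ i j k, i ≠ j ∧ i ≠ k ∧ j ≠ k → det3 F (y i) (y j) (y k) ≠ 0 :=
      fun i j k h => hy i j k h.1 h.2.1 h.2.2
    have g1 := G 1 2 4 (by decide)
    have g2 := G 2 3 5 (by decide)
    have g3 := G 3 1 6 (by decide)
    have g4 := G 1 2 5 (by decide)
    have g5 := G 2 3 6 (by decide)
    have g6 := G 3 1 4 (by decide)
    have : ∀ r, g r (rho y) = (g r (det3 F (y 1) (y 2) (y 4)) + g r (det3 F (y 2) (y 3) (y 5))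
      + g r (det3 F (y 3) (y 1) (y 6))) - (g r (det3 F (y 1) (y 2) (y 5))
      + g r (det3 F (y 2) (y 3) (y 6)) + g r (det3 F (y 3) (y 1) (y 4))) := by
      intro r
      rw [rho_eq, P.right_div _ _ _ (by simp [*]) (by simp [*]),
        P.mul _ _ _ (by simp [*]) (by simp [*]), P.mul _ _ _ (by simp [*]) (by simp [*]),
        P.mul _ _ _ (by simp [*]) (by simp [*]), P.mul _ _ _ (by simp [*]) (by simp [*])]
    exact this _)
  rw [key, alt_sub, alt_add, alt_add, alt_add, alt_add, h1, h2, h3, h4, h5, h6]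
  simp

end core

section concrete

open Classical in
/-- `L x` is `x` as an element of the additive version of `F^*`. -/
def LL (x : F) : Additive Fˣ := if h : x = 0 then 0 else Additive.ofMul (Units.mk0 x h)

open Classical in
/-- class of `{x}` in `B_2` -/
def cl (x : F) : B2 F := if h : x = 0 then 0 else
  QuotientAddGroup.mk (Finsupp.single (Units.mk0 x h) 1)

/-- the pairing -/
def gg (x u : F) : (B2 F ⊗[ℤ] Additive Fˣ) ⊗[ℤ] ℚ := (cl x ⊗ₜ[ℤ] LL u) ⊗ₜ[ℤ] (1 : ℚ)

theorem LL_unit (x : Fˣ) : LL (x : F) = Additive.ofMul x := by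
  simp [LL]

theorem cl_unit (x : Fˣ) : cl (x : F) = QuotientAddGroup.mk (Finsupp.single x 1) := by
  simp [cl]

theorem tf_tensor {X : Type*} [AddCommGroup X] (w : X ⊗[ℤ] ℚ) (h : w + w = 0) : w = 0 := by
  have e := TensorProduct.comm ℤ X ℚ
  apply e.injective
  rw [map_zero]
  have h2 : e w + e w = 0 := by rw [← map_add, h, map_zero]
  rw [← two_smul ℚ] at h2
  exact (smul_eq_zero.mp h2).resolve_left (by norm_num)

theorem cl_five (z : Fin 5 → F) (hz : Function.Injective z) :
    cl (crossRatio F (z 1) (z 2) (z 3) (z 4)) - cl (crossRatio F (z 0) (z 2) (z 3) (z 4))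
    + cl (crossRatio F (z 0) (z 1) (z 3) (z 4)) - cl (crossRatio F (z 0) (z 1) (z 2) (z 4))
    + cl (crossRatio F (z 0) (z 1) (z 2) (z 3)) = 0 := by
  have hne : ∀ i j, i ≠ j → z i - z j ≠ 0 := fun i j h => sub_ne_zero.mpr (hz.ne h)
  have hcr : ∀ i j k l, i ≠ k ∧ j ≠ l ∧ i ≠ l ∧ j ≠ k →
      crossRatio F (z i) (z j) (z k) (z l) ≠ 0 := fun i j k l h =>
    div_ne_zero (mul_ne_zero (hne _ _ h.1) (hne _ _ h.2.1))
      (mul_ne_zero (hne _ _ h.2.2.1) (hne _ _ h.2.2.2))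
  have hr : ∀ i : Fin 5, crossRatio F (z (i.succAbove 0)) (z (i.succAbove 1))
      (z (i.succAbove 2)) (z (i.succAbove 3)) ≠ 0 := fun i => hcr _ _ _ _ (by
        revert i; decide)
  have hmem : (∑ i : Fin 5, (-1 : ℤ) ^ ((i : ℕ) + 1) •
      Finsupp.single (Units.mk0 _ (hr i)) (1 : ℤ)) ∈ R2 F :=
    AddSubgroup.subset_closure (Or.inr ⟨z, fun i => Units.mk0 _ (hr i), hz,
      fun i => rfl, rfl⟩)
  have h0 := (QuotientAddGroup.eq_zero_iff _).mpr hmem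
  have h1 : ∀ i : Fin 5, cl (crossRatio F (z (i.succAbove 0)) (z (i.succAbove 1))
      (z (i.succAbove 2)) (z (i.succAbove 3)))
      = (QuotientAddGroup.mk (Finsupp.single (Units.mk0 _ (hr i)) (1 : ℤ)) : B2 F) := by
    intro i
    rw [← cl_unit]; rfl
  have h2 : ∑ i : Fin 5, (-1 : ℤ) ^ ((i : ℕ) + 1) • cl (crossRatio F (z (i.succAbove 0))
      (z (i.succAbove 1)) (z (i.succAbove 2)) (z (i.succAbove 3))) = 0 := by
    rw [← h0, ← QuotientAddGroup.mk'_apply, map_sum]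
    refine Finset.sum_congr rfl fun i _ => ?_
    rw [h1, map_zsmul]; rfl
  rw [← neg_eq_zero, ← h2, Fin.sum_univ_five]
  have e : ∀ (i : Fin 5) (a b c d : Fin 5), (i.succAbove 0 = a ∧ i.succAbove 1 = b ∧
      i.succAbove 2 = c ∧ i.succAbove 3 = d) → crossRatio F (z (i.succAbove 0))
      (z (i.succAbove 1)) (z (i.succAbove 2)) (z (i.succAbove 3))
      = crossRatio F (z a) (z b) (z c) (z d) := by
    rintro i a b c d ⟨rfl, rfl, rfl, rfl⟩; rfl
  rw [e 0 1 2 3 4 (by decide), e 1 0 2 3 4 (by decide), e 2 0 1 3 4 (by decide),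
    e 3 0 1 2 4 (by decide), e 4 0 1 2 3 (by decide)]
  simp [pow_succ]
  abel

theorem gg_pairing : Pairing _ (gg (F := F)) where
  tf := tf_tensor
  one u := by
    have : cl (1 : F) = 0 := by
      have := cl_unit (1 : Fˣ)
      rw [Units.val_one] at this
      rw [this, QuotientAddGroup.eq_zero_iff]
      exact AddSubgroup.subset_closure (Or.inl rfl)
    rw [gg, this, TensorProduct.zero_tmul, TensorProduct.zero_tmul]
  five u z hz := by
    simp only [gg]
    simp only [← TensorProduct.sub_tmul, ← TensorProduct.add_tmul]
    rw [cl_five z hz, TensorProduct.zero_tmul, TensorProduct.zero_tmul]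
  mul x u v hu hv := by
    have : LL (u * v) = LL u + LL v := by
      rw [LL, LL, LL, dif_neg hu, dif_neg hv, dif_neg (mul_ne_zero hu hv), ← ofMul_mul]
      congr 1
      ext
      simp
    rw [gg, gg, gg, this, TensorProduct.tmul_add, TensorProduct.add_tmul]

theorem gen_of_li (x : Fin 7 → Fin 3 → F)
    (hgen : ∀ s : Finset (Fin 7), s.card = 3 →
      LinearIndependent F (fun i : s => x i)) : Gen x := by
  intro i j k hij hik hjk
  have hs := hgen {i, j, k} (Finset.card_eq_three.mpr ⟨i, j, k, hij, hik, hjk, rfl⟩)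
  let e : Fin 3 → ({i, j, k} : Finset (Fin 7)) :=
    ![⟨i, by simp⟩, ⟨j, by simp⟩, ⟨k, by simp⟩]
  have he : Function.Injective e := by
    intro a b hab
    have := congrArg Subtype.val hab
    fin_cases a <;> fin_cases b <;> simp [e] at this ⊢ <;> simp_all
  have h2 := hs.comp e he
  have h3 : ((fun i : ({i, j, k} : Finset (Fin 7)) => x i) ∘ e)
      = (Matrix.of ![x i, x j, x k]).row := by
    ext a b
    fin_cases a <;> rfl
  rw [h3] at h2
  rw [Matrix.linearIndependent_rows_iff_isUnit, Matrix.isUnit_iff_isUnit_det] at h2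
  exact h2.ne_zero

theorem delta_single (x : Fˣ) :
    deltaBS F (Finsupp.single x 1) ⊗ₜ[ℤ] (1 : ℚ) = gg (x : F) (x : F) := by
  rw [gg, cl_unit, LL_unit]
  simp [deltaBS]

end concrete

end helpers

/-- for seven vectors `x_1,…,x_7 ∈ F³` in generic position, the element
`Σ_{i=1}^7 (−1)^i r_3(x_1,…,x̂_i,…,x_7)` of `ℤ[F^*]`, where
`r_3(l_0,…,l_5) = Alt_6 {ρ(l_0,…,l_5)}`, is killed by `δ : ℤ[F^*] → B_2(F) ⊗ F^*`
after tensoring with ℚ.  The units `ru i σ` are the values of the generalized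
cross-ratios `ρ(x ∘ (omit i) ∘ σ)` (which are nonzero by genericity). -/
theorem statement_7 [Infinite F] (x : Fin 7 → Fin 3 → F)
    (hgen : ∀ s : Finset (Fin 7), s.card = 3 →
      LinearIndependent F (fun i : s => x i))
    (ru : Fin 7 → Equiv.Perm (Fin 6) → Fˣ)
    (hru : ∀ (i : Fin 7) (σ : Equiv.Perm (Fin 6)),
      (ru i σ : F) = tripleRatio F (fun j => x (i.succAbove (σ j)))) :
    (deltaBS F (∑ i : Fin 7, (-1 : ℤ) ^ ((i : ℕ) + 1) •
          ∑ σ : Equiv.Perm (Fin 6),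
            ((Equiv.Perm.sign σ : ℤˣ) : ℤ) • Finsupp.single (ru i σ) (1 : ℤ)))
        ⊗ₜ[ℤ] (1 : ℚ)
      = (0 : (B2 F ⊗[ℤ] Additive Fˣ) ⊗[ℤ] ℚ) := by
  have hx := gen_of_li x hgen
  let Φ : (Fˣ →₀ ℤ) →+ ((B2 F ⊗[ℤ] Additive Fˣ) ⊗[ℤ] ℚ) :=
    ((TensorProduct.mk ℤ (B2 F ⊗[ℤ] Additive Fˣ) ℚ).flip (1 : ℚ)).toAddMonoidHom.comp (deltaBS F)
  have hΦ : ∀ v : Fˣ, Φ (Finsupp.single v 1) = gg (v : F) (v : F) := fun v => delta_single v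
  change Φ _ = 0
  simp only [map_sum, map_zsmul, hΦ, hru]
  rw [sum_eq_alt x (fun l => gg (tripleRatio F l) (tripleRatio F l)), neg_eq_zero]
  exact core' gg_pairing hx

end
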